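/- There is an absolute constant C > 0 with the following property. Let M ≥ 1, T > 0, and let h, J : ℝ×[0,T] → ℝ be C¹ and 1-periodic in x, with ∂_t h = ∂ₓJ on ℝ×(0,T), |h(x,t)| ≤ M and |∂ₓh(x,t)| ≤ M for all (x,t), and ∫₀ᵀ ∫₀¹ J(x,t)² dx dt ≤ M². Then h is uniformly Hölder continuous in time with exponent 1/5: |h(x,t) − h(x,s)| ≤ C·M·|t − s|^{1/5} for all x ∈ ℝ and all s, t ∈ [0,T]. -/

import Mathlib

open MeasureTheory Set intervalIntegral

lemma core_bound (D K : ℝ → ℝ) (M τ x : ℝ) (hM : 1 ≤ M)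
    (hD : Continuous D) (hK : Continuous K)
    (hL : ∀ y, x ≤ y → |D y - D x| ≤ 2 * M * (y - x))
    (hint : ∀ a b, ∫ y in a..b, D y = K b - K a)
    (hK2 : ∫ y in x..(x+1), K y ^ 2 ≤ τ * M ^ 2)
    (hA : D x ≤ 2 * M) (hA0 : 0 ≤ D x) : (D x) ^ 5 ≤ 4096 * τ * M ^ 5 := by
  set A := D x with hAdef
  have hM0 : 0 < M := by linarith
  obtain ⟨r, hr⟩ : ∃ r, r = A / (8 * M) := ⟨_, rfl⟩
  have hAr : A = 8 * M * r := by rw [hr]; field_simp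
  have hr0 : 0 ≤ r := by rw [hr]; positivity
  have hr1 : 2 * r ≤ 1 := by
    by_contra hc
    nlinarith
  have hii : ∀ a b, IntervalIntegrable (fun y => K y ^ 2) volume a b :=
    fun a b => (hK.pow 2).intervalIntegrable a b
  have hpt : ∀ y ∈ Icc x (x + r), (A / 2 * r) ^ 2 / 2 ≤ K (y + r) ^ 2 + K y ^ 2 := by
    intro y hy
    have h1 : A / 2 * r ≤ K (y + r) - K y := by
      rw [← hint]
      have : ∫ z in y..(y + r), (A / 2) ≤ ∫ z in y..(y + r), D z := by
        apply intervalIntegral.integral_mono_on (by linarith) (by simp) (hD.intervalIntegrable _ _)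
        intro z hz
        have h2 := (abs_le.1 (hL z (by linarith [hy.1, hz.1]))).1
        have : 2 * M * (z - x) ≤ 2 * M * (2 * r) := by
          gcongr
          linarith [hy.2, hz.2]
        nlinarith
      simp at this
      linarith
    have h3 : (0:ℝ) ≤ A / 2 * r := by positivity
    have h4 : (A / 2 * r) ^ 2 ≤ (K (y + r) - K y) ^ 2 := by gcongr
    nlinarith [sq_nonneg (K (y + r) + K y)]
  have hI : ∫ y in x..(x + r), (A / 2 * r) ^ 2 / 2 ≤ ∫ y in x..(x + r), (K (y + r) ^ 2 + K y ^ 2) := by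
    apply intervalIntegral.integral_mono_on (by linarith) (by simp) _ hpt
    apply Continuous.intervalIntegrable
    fun_prop
  rw [intervalIntegral.integral_add (Continuous.intervalIntegrable (by fun_prop) _ _) (hii _ _),
    intervalIntegral.integral_comp_add_right (fun y => K y ^ 2) r, add_comm (intervalIntegral _ _ _ _),
    intervalIntegral.integral_add_adjacent_intervals (hii _ _) (hii _ _)] at hI
  have hJ : ∫ y in x..(x + r + r), K y ^ 2 ≤ ∫ y in x..(x + 1), K y ^ 2 := by
    apply intervalIntegral.integral_mono_interval le_rfl (by linarith) (by linarith) _ (hii _ _)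
    exact Filter.Eventually.of_forall fun y => sq_nonneg _
  simp only [intervalIntegral.integral_const, smul_eq_mul] at hI
  have h5 : r * ((A / 2 * r) ^ 2 / 2) ≤ τ * M ^ 2 := by
    have : x + r - x = r := by ring
    rw [this] at hI
    linarith
  have h6 : A ^ 5 = 4096 * M ^ 3 * (r * ((A / 2 * r) ^ 2 / 2)) := by
    rw [hAr]; ring
  rw [h6]
  calc _ ≤ 4096 * M ^ 3 * (τ * M ^ 2) := by gcongr
    _ = _ := by ring

lemma swap_cont (F : ℝ × ℝ → ℝ) (hF : Continuous F) (a b c d : ℝ) :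
    ∫ x in a..b, ∫ y in c..d, F (x, y) = ∫ y in c..d, ∫ x in a..b, F (x, y) := by
  apply MeasureTheory.intervalIntegral_intervalIntegral_swap (F := fun x y => F (x, y))
  have : IntegrableOn F (uIcc a b ×ˢ uIcc c d) :=
    hF.continuousOn.integrableOn_compact (isCompact_uIcc.prod isCompact_uIcc)
  exact this.mono_set (prod_mono uIoc_subset_uIcc uIoc_subset_uIcc)

lemma sq_integral_le (f : ℝ → ℝ) (hf : Continuous f) (s t : ℝ) (hst : s < t) :
    (∫ u in s..t, f u) ^ 2 ≤ (t - s) * ∫ u in s..t, f u ^ 2 := by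
  set I := ∫ u in s..t, f u with hI
  have hτ : 0 < t - s := by linarith
  have h0 : 0 ≤ ∫ u in s..t, ((t - s) * f u - I) ^ 2 :=
    intervalIntegral.integral_nonneg hst.le fun u _ => sq_nonneg _
  have h1 : ∫ u in s..t, ((t - s) * f u - I) ^ 2
      = (t - s) ^ 2 * (∫ u in s..t, f u ^ 2) - 2 * (t - s) * I * I + (t - s) * I ^ 2 := by
    have e : ∀ u, ((t - s) * f u - I) ^ 2
        = (t - s) ^ 2 * f u ^ 2 - 2 * (t - s) * I * f u + I ^ 2 := fun u => by ring
    simp_rw [e]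
    rw [intervalIntegral.integral_add, intervalIntegral.integral_sub,
      intervalIntegral.integral_const_mul, intervalIntegral.integral_const_mul, ← hI]
    · simp
    all_goals exact Continuous.intervalIntegrable (by fun_prop) _ _
  rw [h1] at h0
  have h2 : 0 ≤ (t - s) * ((t - s) * (∫ u in s..t, f u ^ 2) - I ^ 2) := by linarith
  have := nonneg_of_mul_nonneg_right h2 hτ
  linarith

lemma hasDeriv_fst (h : ℝ × ℝ → ℝ) (hh : ContDiff ℝ 1 h) (x t : ℝ) :
    HasDerivAt (fun y => h (y, t)) (fderiv ℝ h (x, t) (1, 0)) x := by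
  have h1 := (hh.differentiable one_ne_zero (x, t)).hasFDerivAt
  exact h1.comp_hasDerivAt x ((hasDerivAt_id x).prodMk (hasDerivAt_const x t))

lemma hasDeriv_snd (h : ℝ × ℝ → ℝ) (hh : ContDiff ℝ 1 h) (x t : ℝ) :
    HasDerivAt (fun u => h (x, u)) (fderiv ℝ h (x, t) (0, 1)) t := by
  have h1 := (hh.differentiable one_ne_zero (x, t)).hasFDerivAt
  exact h1.comp_hasDerivAt t ((hasDerivAt_const t x).prodMk (hasDerivAt_id t))

lemma main_lt (M T : ℝ) (hM : 1 ≤ M) (h J : ℝ × ℝ → ℝ)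
    (hh : ContDiff ℝ 1 h) (hJ : ContDiff ℝ 1 J)
    (pJ : ∀ x t, J (x + 1, t) = J (x, t))
    (pde : ∀ x : ℝ, ∀ t ∈ Ioo (0:ℝ) T, fderiv ℝ h (x, t) (0, 1) = fderiv ℝ J (x, t) (1, 0))
    (b0 : ∀ x : ℝ, ∀ t ∈ Icc (0:ℝ) T, |h (x, t)| ≤ M)
    (b1 : ∀ x : ℝ, ∀ t ∈ Icc (0:ℝ) T, |fderiv ℝ h (x, t) (1, 0)| ≤ M)
    (bJ : (∫ t in (0:ℝ)..T, ∫ x in (0:ℝ)..1, (J (x, t)) ^ 2) ≤ M ^ 2)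
    (x s t : ℝ) (hs : s ∈ Icc (0:ℝ) T) (ht : t ∈ Icc (0:ℝ) T) (hst : s < t) :
    |h (x, t) - h (x, s)| ^ 5 ≤ 4096 * (t - s) * M ^ 5 := by
  have hc := hh.continuous
  have hJc := hJ.continuous
  have hg : Continuous fun p : ℝ × ℝ => fderiv ℝ J p (1, 0) :=
    (hJ.continuous_fderiv one_ne_zero).clm_apply continuous_const
  let D : ℝ → ℝ := fun y => h (y, t) - h (y, s)
  let K : ℝ → ℝ := fun y => ∫ u in s..t, J (y, u)
  have hD : Continuous D := by fun_prop
  have hK : Continuous K :=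
    intervalIntegral.continuous_parametric_intervalIntegral_of_continuous'
      (f := fun y u => J (y, u)) (by exact hJc) s t
  have lip : ∀ u ∈ Icc (0:ℝ) T, ∀ y, x ≤ y → |h (y, u) - h (x, u)| ≤ M * (y - x) := by
    intro u hu y hy
    have := convex_univ.norm_image_sub_le_of_norm_hasDerivWithin_le (x := x) (y := y)
      (f := fun y => h (y, u)) (f' := fun y => fderiv ℝ h (y, u) (1, 0)) (C := M)
      (fun z _ => (hasDeriv_fst h hh z u).hasDerivWithinAt) (fun z _ => b1 z u hu)
      (mem_univ _) (mem_univ _)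
    simpa [abs_of_nonneg (sub_nonneg.2 hy)] using this
  have hL : ∀ y, x ≤ y → |D y - D x| ≤ 2 * M * (y - x) := by
    intro y hy
    have h1 := abs_le.1 (lip t ht y hy)
    have h2 := abs_le.1 (lip s hs y hy)
    simp only [D]
    rw [abs_le]
    constructor <;> linarith [h1.1, h1.2, h2.1, h2.2]
  have hA : |D x| ≤ 2 * M := by
    have h1 := abs_le.1 (b0 x t ht)
    have h2 := abs_le.1 (b0 x s hs)
    simp only [D]
    rw [abs_le]
    constructor <;> linarith [h1.1, h1.2, h2.1, h2.2]
  have hDint : ∀ y, D y = ∫ u in s..t, fderiv ℝ J (y, u) (1, 0) := by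
    intro y
    symm
    apply integral_eq_sub_of_hasDerivAt_of_le (f := fun u => h (y, u)) hst.le
    · exact Continuous.continuousOn (by fun_prop)
    · intro u hu
      rw [← pde y u ⟨by linarith [hs.1, hu.1], by linarith [ht.2, hu.2]⟩]
      exact hasDeriv_snd h hh y u
    · exact Continuous.intervalIntegrable (hg.comp (by fun_prop : Continuous fun u : ℝ => (y, u))) _ _
  have hint : ∀ a b, ∫ y in a..b, D y = K b - K a := by
    intro a b
    simp_rw [hDint]
    rw [swap_cont (fun p => fderiv ℝ J p (1, 0)) hg]
    have : ∀ u, ∫ y in a..b, fderiv ℝ J (y, u) (1, 0) = J (b, u) - J (a, u) := by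
      intro u
      apply integral_eq_sub_of_hasDerivAt (f := fun y => J (y, u))
      · intro y _
        exact hasDeriv_fst J hJ y u
      · exact Continuous.intervalIntegrable
          (hg.comp (by fun_prop : Continuous fun y : ℝ => (y, u))) _ _
    simp_rw [this]
    exact intervalIntegral.integral_sub (Continuous.intervalIntegrable (by fun_prop) _ _)
      (Continuous.intervalIntegrable (by fun_prop) _ _)
  have hJ2 : Continuous fun p : ℝ × ℝ => J p ^ 2 := by fun_prop
  have hin1 : Continuous fun y => ∫ u in s..t, J (y, u) ^ 2 :=
    intervalIntegral.continuous_parametric_intervalIntegral_of_continuous'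
      (f := fun y u => J (y, u) ^ 2) (by exact hJ2) s t
  have hin2 : Continuous fun u => ∫ y in (0:ℝ)..1, J (y, u) ^ 2 :=
    intervalIntegral.continuous_parametric_intervalIntegral_of_continuous'
      (f := fun u y => J (y, u) ^ 2) (by exact hJ2.comp continuous_swap) 0 1
  have hK2 : ∫ y in x..(x+1), K y ^ 2 ≤ (t - s) * M ^ 2 := by
    have e1 : ∫ y in x..(x+1), K y ^ 2 ≤ ∫ y in x..(x+1), (t - s) * ∫ u in s..t, J (y, u) ^ 2 := by
      apply intervalIntegral.integral_mono_on (by linarith)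
        ((hK.pow 2).intervalIntegrable _ _)
        ((hin1.const_mul _).intervalIntegrable _ _)
      intro y _
      exact sq_integral_le (fun u => J (y, u)) (by fun_prop) s t hst
    rw [intervalIntegral.integral_const_mul, swap_cont (fun p => J p ^ 2) hJ2] at e1
    have e2 : ∀ u, ∫ y in x..(x+1), J (y, u) ^ 2 = ∫ y in (0:ℝ)..1, J (y, u) ^ 2 := by
      intro u
      have hp : Function.Periodic (fun y => J (y, u) ^ 2) 1 := fun y => by simp [pJ]
      simpa using hp.intervalIntegral_add_eq x 0
    simp_rw [e2] at e1
    have e3 : ∫ u in s..t, ∫ y in (0:ℝ)..1, J (y, u) ^ 2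
        ≤ ∫ u in (0:ℝ)..T, ∫ y in (0:ℝ)..1, J (y, u) ^ 2 := by
      apply intervalIntegral.integral_mono_interval hs.1 hst.le ht.2 _ (hin2.intervalIntegrable _ _)
      exact Filter.Eventually.of_forall fun u =>
        intervalIntegral.integral_nonneg zero_le_one fun y _ => sq_nonneg _
    refine e1.trans ?_
    exact mul_le_mul_of_nonneg_left (e3.trans bJ) (by linarith)
  change |D x| ^ 5 ≤ _
  rcases le_total 0 (D x) with h0 | h0
  · rw [abs_of_nonneg h0] at hA ⊢
    exact core_bound D K M (t - s) x hM hD hK hL hint hK2 hA h0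
  · rw [abs_of_nonpos h0] at hA ⊢
    refine core_bound (fun y => - D y) (fun y => - K y) M (t - s) x hM hD.neg hK.neg ?_ ?_ ?_ hA
      (by linarith)
    · intro y hy
      have := hL y hy
      rw [← abs_neg] at this
      convert this using 2
      ring
    · intro a b
      rw [intervalIntegral.integral_neg, hint]
      ring
    · simpa using hK2

lemma root_bound (A τ M : ℝ) (hA : 0 ≤ A) (hτ : 0 ≤ τ) (hM : 1 ≤ M)
    (hb : A ^ 5 ≤ 4096 * τ * M ^ 5) : A ≤ 6 * M * τ ^ ((1:ℝ) / 5) := by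
  have h1 : (τ ^ ((1:ℝ) / 5)) ^ 5 = τ := by
    rw [← Real.rpow_natCast, ← Real.rpow_mul hτ]
    norm_num
  have h2 : 0 ≤ τ ^ ((1:ℝ) / 5) := by positivity
  have h3 : 0 ≤ M := by linarith
  apply le_of_pow_le_pow_left₀ (n := 5) (by norm_num) (by positivity)
  rw [mul_pow, mul_pow, h1]
  have : 0 ≤ τ * M ^ 5 := by positivity
  nlinarith

/-- uniform Hölder-1/5 continuity in time, part of the Proposition in
Section 4.3. There is an absolute constant `C > 0` such that whenever `M ≥ 1`, `T > 0`,
`h, J` are C¹ and 1-periodic in `x`, `∂ₜh = ∂ₓJ` on `ℝ×(0,T)`, `|h| ≤ M`, `|∂ₓh| ≤ M`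
on `ℝ×[0,T]`, and `∫₀ᵀ∫₀¹ J² ≤ M²`, then
`|h(x,t) − h(x,s)| ≤ C·M·|t − s|^{1/5}` for all `x ∈ ℝ` and `s, t ∈ [0,T]`. -/
theorem stmt_18 :
    ∃ C > (0:ℝ), ∀ M T : ℝ, 1 ≤ M → 0 < T →
      ∀ h J : ℝ × ℝ → ℝ, ContDiff ℝ 1 h → ContDiff ℝ 1 J →
        (∀ x t, h (x + 1, t) = h (x, t)) → (∀ x t, J (x + 1, t) = J (x, t)) →
        (∀ x : ℝ, ∀ t ∈ Ioo (0:ℝ) T, fderiv ℝ h (x, t) (0, 1) = fderiv ℝ J (x, t) (1, 0)) →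
        (∀ x : ℝ, ∀ t ∈ Icc (0:ℝ) T, |h (x, t)| ≤ M) →
        (∀ x : ℝ, ∀ t ∈ Icc (0:ℝ) T, |fderiv ℝ h (x, t) (1, 0)| ≤ M) →
        (∫ t in (0:ℝ)..T, ∫ x in (0:ℝ)..1, (J (x, t)) ^ 2) ≤ M ^ 2 →
        ∀ x : ℝ, ∀ s ∈ Icc (0:ℝ) T, ∀ t ∈ Icc (0:ℝ) T,
          |h (x, t) - h (x, s)| ≤ C * M * |t - s| ^ ((1:ℝ) / 5) := by
  refine ⟨6, by norm_num, ?_⟩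
  intro M T hM hT h J hh hJ ph pJ pde b0 b1 bJ x s hs t ht
  apply root_bound _ _ _ (abs_nonneg _) (abs_nonneg _) hM
  rcases lt_trichotomy s t with hst | hst | hst
  · rw [abs_of_pos (sub_pos.2 hst)]
    exact main_lt M T hM h J hh hJ pJ pde b0 b1 bJ x s t hs ht hst
  · subst hst
    simp
  · rw [abs_sub_comm, abs_sub_comm t s, abs_of_pos (sub_pos.2 hst)]
    exact main_lt M T hM h J hh hJ pJ pde b0 b1 bJ x t s ht hs hst
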